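/- arXiv:1103.0875 — 3 statements merged into one kernel-verified Lean document; each statement's English description precedes it below -/
import Mathlib

section
/- (Proposition 3, necessary length.) Let C, D, m_h, m_v be positive integers with C ≥ 2D, m_h > D, and 1 ≤ m_v < m_v^N(C,D,m_h). Then for almost every choice of analysis filters h = (h_1,…,h_C) ∈ (ℂ^{m_h})^C (Lebesgue measure on ℂ^{C·m_h}) the following holds: for every integer n₀ with 0 ≤ ⌈n₀/D⌉ ≤ ⌊m_h/D⌋ + ⌊m_v/D⌋ − 2, there do not exist synthesis filters v_1,…,v_C ∈ ℂ^{m_v} such that the filter bank achieves perfect reconstruction with delay n₀. -/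
open MeasureTheory Finset

noncomputable section

/-- Extension by zero of a finite complex vector (positions `0,…,m-1`) to `ℤ`. -/
def extZ {m : ℕ} (f : Fin m → ℂ) : ℤ → ℂ :=
  fun n => ∑ k : Fin m, if ((k : ℕ) : ℤ) = n then f k else 0

/-- Perfect reconstruction with delay `n₀` for the `C`-channel, `D`-fold subsampled
filter bank with analysis filters `h` and synthesis filters `v`. -/
def PerfectReconstruction (C D : ℕ) {mh mv : ℕ}
    (h : Fin C → Fin mh → ℂ) (v : Fin C → Fin mv → ℂ) (n₀ : ℤ) : Prop :=
  ∀ n m : ℤ,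
    (∑ i : Fin C, ∑ᶠ k : ℤ, extZ (v i) (n - (D : ℤ) * k) * extZ (h i) ((D : ℤ) * k - m))
      = if n = m + n₀ then 1 else 0

/-- The `p`-th polyphase length `⌈(m - p)/D⌉`. -/
def polyLen (D m p : ℕ) : ℤ := ⌈((m : ℚ) - (p : ℚ)) / (D : ℚ)⌉

/-- The necessary-length condition: `⌊m_v/D⌋ ≥ 1` and
`∑_{p=0}^{D-1} ⌊(m_{h;p} - 1)/⌊m_v/D⌋⌋ ≤ C - D`. -/
def NecLenCond (C D mh mv : ℕ) : Prop :=
  1 ≤ mv / D ∧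
    ∑ p ∈ Finset.range D, ⌊((polyLen D mh p : ℚ) - 1) / ((mv / D : ℕ) : ℚ)⌋
      ≤ (C : ℤ) - (D : ℤ)

/-- The necessary length `m_v^N(C,D,m_h)`: the least `m_v` satisfying the
necessary-length condition. -/
def mvN (C D mh : ℕ) : ℕ := sInf {mv : ℕ | NecLenCond C D mh mv}

/-!
Restricting perfect reconstruction to the output positions `n ≡ D - 1 (mod D)`, where the synthesis
filters have their shortest polyphase components (`L = ⌊m_v/D⌋` taps each), gives a linear system
with rows `x ∈ ℤ` and `C * L` unknowns: `∑_i ∑_{a < L} h_i[x - D a] v_i[D - 1 + D a]` is `1` for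
`x = n₀ - D + 1` and `0` otherwise. Partition `ℕ` into arithmetic progressions of length `L` and
step `D`. The number of progressions starting below `m_h` is `D + ∑_p ⌊(m_{h;p} - 1)/L⌋`, so when
the necessary-length condition fails, `C` of them avoid the one nonzero row. The square subsystem on
the rows of these progressions is the identity when `h_i` is the unit impulse at the start of the
`i`-th one, hence it is invertible for almost every `h`. Then all unknowns vanish, which
contradicts the nonzero row.
-/

section ZeroExtension

variable {m : ℕ}

lemma extZ_add (f g : Fin m → ℂ) (n : ℤ) : extZ (f + g) n = extZ f n + extZ g n := by
  simp only [extZ, Pi.add_apply, ← sum_add_distrib]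
  exact sum_congr rfl fun k _ => by split_ifs <;> simp

lemma extZ_smul (t : ℂ) (f : Fin m → ℂ) (n : ℤ) : extZ (t • f) n = t * extZ f n := by
  simp only [extZ, Pi.smul_apply, smul_eq_mul, mul_sum, mul_ite, mul_zero]

lemma extZ_single_one (b : Fin m) (n : ℤ) :
    extZ (Pi.single b 1) n = if ((b : ℕ) : ℤ) = n then 1 else 0 := by
  rw [extZ, sum_eq_single b (fun k _ hk => by simp [hk]) (by simp), Pi.single_eq_same]

lemma nonneg_and_lt_of_extZ_ne_zero {f : Fin m → ℂ} {n : ℤ} (hf : extZ f n ≠ 0) :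
    0 ≤ n ∧ n < m := by
  obtain ⟨k, -, hk⟩ := exists_ne_zero_of_sum_ne_zero hf
  have : ((k : ℕ) : ℤ) = n := by
    by_contra hne
    exact hk (if_neg hne)
  omega

end ZeroExtension

lemma finsum_eq_sum_of_support_subset_range {α β M : Type*} [AddCommMonoid M] [Fintype β]
    {f : α → M} {g : β → α} (hg : Function.Injective g)
    (hf : Function.support f ⊆ Set.range g) : ∑ᶠ a, f a = ∑ b, f (g b) := by
  rw [← finsum_eq_sum_of_fintype, ← finsum_mem_range hg, ← finsum_mem_univ]
  exact finsum_mem_inter_support_eq' _ _ _ fun a ha => by simpa using hf ha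

lemma finite_setOf_det_add_smul_eq_zero {R n : Type*} [CommRing R] [IsDomain R] [Fintype n]
    [DecidableEq n] (A : Matrix n n R) {B : Matrix n n R} (hB : B.det ≠ 0) :
    {t : R | (A + t • B).det = 0}.Finite := by
  let p : Polynomial R :=
    ((Polynomial.X : Polynomial R) • B.map Polynomial.C + A.map Polynomial.C).det
  have hp : p ≠ 0 := by
    intro hzero
    rw [← Polynomial.coeff_det_X_add_C_card B A] at hB
    exact hB (by simpa using congrArg (·.coeff (Fintype.card n)) hzero)
  have heval (t : R) : p.eval t = (A + t • B).det := by
    rw [← Polynomial.coe_evalRingHom, RingHom.map_det]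
    congr 1
    ext i j
    simp [add_comm, mul_comm t]
  simpa only [Polynomial.IsRoot, heval] using Polynomial.finite_setOfPred_isRoot hp

lemma ae_det_linearMap_ne_zero {𝕜 E n : Type*} [NontriviallyNormedField 𝕜] [LocallyCompactSpace 𝕜]
    [NormedAddCommGroup E] [NormedSpace 𝕜 E] [FiniteDimensional 𝕜 E] [MeasurableSpace E]
    [BorelSpace E] [Fintype n] [DecidableEq n] (μ : Measure E) [μ.IsAddHaarMeasure]
    (A : E →ₗ[𝕜] Matrix n n 𝕜) {e : E} (he : (A e).det ≠ 0) :
    ∀ᵐ x ∂μ, (A x).det ≠ 0 := by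
  borelize 𝕜
  have : ProperSpace 𝕜 := .of_locallyCompactSpace 𝕜
  have : ProperSpace E := FiniteDimensional.proper 𝕜 E
  have hmeas : MeasurableSet {x : E | (A x).det ≠ 0} :=
    (isOpen_ne_fun A.continuous_of_finiteDimensional.matrix_det continuous_const).measurableSet
  refine ae_mem_of_ae_add_linearMap_mem (LinearMap.toSpanSingleton 𝕜 E e) Measure.addHaar μ hmeas
    fun y => ?_
  have hfin := finite_setOf_det_add_smul_eq_zero (A y) he
  filter_upwards [hfin.countable.ae_notMem Measure.addHaar] with t ht
  change (A (y + t • e)).det ≠ 0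
  rwa [map_add, map_smul]

lemma floor_ceil_sub_one_div_add_one {𝕜 : Type*} [Field 𝕜] [LinearOrder 𝕜] [IsStrictOrderedRing 𝕜]
    [FloorRing 𝕜] (q : 𝕜) {c : ℕ} (hc : 0 < c) :
    ⌊((⌈q⌉ : 𝕜) - 1) / c⌋ + 1 = ⌈q / c⌉ := by
  have hc' : (0 : 𝕜) < c := Nat.cast_pos.2 hc
  refine eq_of_forall_ge_iff fun z => ?_
  calc ⌊((⌈q⌉ : 𝕜) - 1) / c⌋ + 1 ≤ z
      ↔ (⌈q⌉ : 𝕜) - 1 < z * c := by rw [Int.add_one_le_iff, Int.floor_lt, div_lt_iff₀ hc']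
    _ ↔ ⌈q⌉ ≤ z * c := by rw [sub_lt_iff_lt_add, ← Int.lt_add_one_iff]; norm_cast
    _ ↔ ⌈q / c⌉ ≤ z := by rw [Int.ceil_le, Int.ceil_le, div_le_iff₀ hc']; norm_cast

section BlockStarts

variable {D L : ℕ}

/-- The start of the block containing `n`, where `ℕ` is partitioned into the arithmetic
progressions `s, s + D, …, s + D (L - 1)` with `L ∣ s / D`. -/
def blockStart (D L n : ℕ) : ℕ := n - D * (n / D % L)

/-- The starts below `m` of the blocks of `blockStart`. -/
def blockStarts (D L m : ℕ) : Finset ℕ := {n ∈ range m | L ∣ n / D}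

lemma blockStart_add_mul (hD : 0 < D) {s a : ℕ} (hs : L ∣ s / D) (ha : a < L) :
    blockStart D L (s + D * a) = s := by
  obtain ⟨j, hj⟩ := hs
  rw [blockStart, Nat.add_mul_div_left _ _ hD, hj, Nat.mul_add_mod, Nat.mod_eq_of_lt ha,
    Nat.add_sub_cancel]

lemma modEq_mul_iff_mod_eq_and_dvd_div {p : ℕ} (hp : p < D) (n : ℕ) :
    n ≡ p [MOD D * L] ↔ n % D = p ∧ L ∣ n / D := by
  rw [Nat.ModEq, Nat.mod_mul, Nat.mod_mul, Nat.mod_eq_of_lt hp, Nat.div_eq_of_lt hp, Nat.zero_mod,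
    Nat.dvd_iff_mod_eq_zero]
  have : n % D < D := Nat.mod_lt n (by omega)
  rcases (n / D % L).eq_zero_or_pos with hzero | hpos
  · simp [hzero]
  · have : D ≤ D * (n / D % L) := Nat.le_mul_of_pos_right D hpos
    omega

lemma card_blockStarts (hD : 0 < D) (hL : 0 < L) (m : ℕ) :
    (#(blockStarts D L m) : ℤ) =
      ∑ p ∈ range D, ⌊((polyLen D m p : ℚ) - 1) / (L : ℚ)⌋ + D := by
  have hclass : ∀ p ∈ range D,
      (#{n ∈ blockStarts D L m | n % D = p} : ℤ) =
        ⌊((polyLen D m p : ℚ) - 1) / (L : ℚ)⌋ + 1 := by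
    intro p hp
    have hpD : p < D := mem_range.1 hp
    have hpDL : p < D * L := hpD.trans_le (Nat.le_mul_of_pos_right D hL)
    have hfilter : {n ∈ blockStarts D L m | n % D = p} = {n ∈ range m | n ≡ p [MOD D * L]} := by
      rw [blockStarts, filter_filter]
      exact filter_congr fun n _ => by rw [and_comm, modEq_mul_iff_mod_eq_and_dvd_div hpD]
    rw [hfilter, ← Nat.count_eq_card_filter_range,
      Nat.count_modEq_card_eq_ceil m (Nat.mul_pos hD hL), Nat.mod_eq_of_lt hpDL, polyLen,
      floor_ceil_sub_one_div_add_one _ hL, div_div, Nat.cast_mul]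
  rw [card_eq_sum_card_fiberwise (f := (· % D)) (t := range D)
      fun n _ => mem_coe.2 (mem_range.2 (Nat.mod_lt n hD)),
    Nat.cast_sum, sum_congr rfl hclass, sum_add_distrib]
  simp

end BlockStarts

section AnalysisMatrix

variable {ι κ : Type*} {D L m : ℕ}

/-- The rows with indices `ρ r` of the matrix of `w ↦ (x ↦ ∑_{i,a} h_i[x - D a] w_{i,a})`, with `L`
taps `a` per channel `i`, as a linear function of the analysis bank `h`. -/
def analysisMatrix (D L : ℕ) (ρ : κ → ℤ) :
    (ι → Fin m → ℂ) →ₗ[ℂ] Matrix κ (ι × Fin L) ℂ where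
  toFun h := Matrix.of fun r c => extZ (h c.1) (ρ r - D * (c.2 : ℕ))
  map_add' h g := by
    ext r c
    exact extZ_add (h c.1) (g c.1) _
  map_smul' t h := by
    ext r c
    exact extZ_smul t (h c.1) _

/-- The rows `b i + D a`, for `a < L`, of the blocks that start at the positions `b i`. -/
def blockRow (D L : ℕ) (b : ι → Fin m) (c : ι × Fin L) : ℤ := (b c.1 : ℕ) + D * (c.2 : ℕ)

lemma analysisMatrix_impulse [DecidableEq ι] {b : ι → Fin m}
    (hb : Function.Injective (blockRow D L b)) :
    analysisMatrix D L (blockRow D L b) (fun i => Pi.single (b i) 1) = 1 := by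
  ext r c
  have hrow : ((b c.1 : ℕ) : ℤ) = blockRow D L b r - D * (c.2 : ℕ) ↔ r = c := by
    rw [eq_sub_iff_add_eq, eq_comm]
    exact hb.eq_iff
  simp only [analysisMatrix, LinearMap.coe_mk, AddHom.coe_mk, Matrix.of_apply, extZ_single_one,
    hrow, Matrix.one_apply]

lemma ae_det_analysisMatrix_ne_zero [Fintype ι] [DecidableEq ι] {b : ι → Fin m}
    (hb : Function.Injective (blockRow D L b)) :
    ∀ᵐ h : ι → Fin m → ℂ, (analysisMatrix D L (blockRow D L b) h).det ≠ 0 := by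
  have : (volume : Measure (Fin m → ℂ)).IsAddHaarMeasure := inferInstance
  refine ae_det_linearMap_ne_zero volume _ (e := fun i => Pi.single (b i) 1) ?_
  rw [analysisMatrix_impulse hb, Matrix.det_one]
  exact one_ne_zero

lemma blockStart_toNat_blockRow (hD : 0 < D) {b : ι → Fin m} (hb : ∀ i, L ∣ (b i : ℕ) / D)
    (c : ι × Fin L) : blockStart D L (blockRow D L b c).toNat = b c.1 :=
  blockStart_add_mul hD (hb c.1) c.2.2

lemma blockRow_injective (hD : 0 < D) {b : ι → Fin m} (hb : ∀ i, L ∣ (b i : ℕ) / D)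
    (hinj : Function.Injective b) : Function.Injective (blockRow D L b) := by
  rintro ⟨i, a⟩ ⟨j, a'⟩ hrow
  obtain rfl : i = j := hinj <| Fin.ext <| by
    rw [← blockStart_toNat_blockRow hD hb (i, a), hrow, blockStart_toNat_blockRow hD hb]
  have : a = a' := by simpa [blockRow, hD.ne', Fin.ext_iff] using hrow
  rw [this]

lemma exists_blockRow_injective_avoiding [Fintype ι] (hD : 0 < D)
    (hcard : Fintype.card ι < #(blockStarts D L m)) (s : ℤ) :
    ∃ b : ι → Fin m, Function.Injective (blockRow D L b) ∧ ∀ c, blockRow D L b c ≠ s := by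
  have hle : Fintype.card ι ≤ #((blockStarts D L m).erase (blockStart D L s.toNat)) := by
    have := pred_card_le_card_erase (s := blockStarts D L m) (a := blockStart D L s.toNat)
    omega
  obtain ⟨g⟩ : Nonempty (ι ↪ (blockStarts D L m).erase (blockStart D L s.toNat)) :=
    Function.Embedding.nonempty_of_card_le (by simpa using hle)
  have hg (i : ι) : (g i : ℕ) ≠ blockStart D L s.toNat ∧ (g i : ℕ) < m ∧ L ∣ (g i : ℕ) / D := by
    simpa only [blockStarts, mem_erase, mem_filter, mem_range] using (g i).2
  let b : ι → Fin m := fun i => ⟨g i, (hg i).2.1⟩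
  have hdvd (i : ι) : L ∣ (b i : ℕ) / D := (hg i).2.2
  have hinj : Function.Injective b := fun i j hij =>
    g.injective (Subtype.ext (congrArg Fin.val hij))
  refine ⟨b, blockRow_injective hD hdvd hinj, fun c hc => (hg c.1).1 ?_⟩
  calc (g c.1 : ℕ) = blockStart D L (blockRow D L b c).toNat :=
        (blockStart_toNat_blockRow hD hdvd c).symm
    _ = blockStart D L s.toNat := congrArg (fun x : ℤ => blockStart D L x.toNat) hc

end AnalysisMatrix

section LastPolyphase

variable {ι : Type*} {C D mh mv : ℕ}

/-- The polyphase components `v_i[D - 1 + D a]` of a synthesis bank: those of residue `D - 1`, which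
are the shortest ones, with `⌊m_v/D⌋` taps. -/
def lastPolyphase (D : ℕ) (v : ι → Fin mv → ℂ) (c : ι × Fin (mv / D)) : ℂ :=
  extZ (v c.1) (D - 1 + D * (c.2 : ℕ))

lemma finsum_extZ_mul_eq_sum_lastPolyphase (hD : 0 < D) (v : ι → Fin mv → ℂ) (i : ι)
    (f : ℤ → ℂ) :
    ∑ᶠ k : ℤ, extZ (v i) ((D - 1 : ℤ) - D * k) * f k =
      ∑ a : Fin (mv / D), lastPolyphase D v (i, a) * f (-(a : ℕ)) := by
  have hinj : Function.Injective fun a : Fin (mv / D) => -((a : ℕ) : ℤ) := fun a b hab =>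
    Fin.ext (by simpa using hab)
  rw [finsum_eq_sum_of_support_subset_range hinj]
  · simp only [lastPolyphase, mul_neg, sub_neg_eq_add]
  · intro k hk
    obtain ⟨hlow, hhigh⟩ := nonneg_and_lt_of_extZ_ne_zero (left_ne_zero_of_mul hk)
    have hk_nonpos : k ≤ 0 := by
      by_contra! hpos
      nlinarith [Int.natCast_pos.2 hD]
    obtain ⟨a, rfl⟩ := Int.exists_eq_neg_ofNat hk_nonpos
    have ha : a < mv / D := by
      have : D * (a + 1) ≤ mv := by zify; linarith
      rwa [Nat.lt_iff_add_one_le, Nat.le_div_iff_mul_le hD, mul_comm]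
    exact ⟨⟨a, ha⟩, rfl⟩

lemma PerfectReconstruction.analysisMatrix_mulVec {h : Fin C → Fin mh → ℂ}
    {v : Fin C → Fin mv → ℂ} {n₀ : ℤ} (H : PerfectReconstruction C D h v n₀) (hD : 0 < D)
    {κ : Type*} (ρ : κ → ℤ) :
    (analysisMatrix D (mv / D) ρ h).mulVec (lastPolyphase D v) =
      fun r => if ρ r = n₀ - D + 1 then 1 else 0 := by
  ext r
  have hPR := H (D - 1) (-ρ r)
  simp only [finsum_extZ_mul_eq_sum_lastPolyphase hD] at hPR
  calc (analysisMatrix D (mv / D) ρ h).mulVec (lastPolyphase D v) r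
      = ∑ i, ∑ a : Fin (mv / D),
          lastPolyphase D v (i, a) * extZ (h i) (D * -((a : ℕ) : ℤ) - -ρ r) := by
        rw [Matrix.mulVec, dotProduct, Fintype.sum_prod_type]
        refine sum_congr rfl fun i _ => sum_congr rfl fun a _ => ?_
        rw [mul_comm, show (D : ℤ) * -((a : ℕ) : ℤ) - -ρ r = ρ r - D * (a : ℕ) by ring]
        rfl
    _ = if ρ r = n₀ - D + 1 then 1 else 0 := by
        rw [hPR]
        exact if_congr (by constructor <;> intro _ <;> omega) rfl rfl

lemma PerfectReconstruction.lastPolyphase_ne_zero {h : Fin C → Fin mh → ℂ}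
    {v : Fin C → Fin mv → ℂ} {n₀ : ℤ} (H : PerfectReconstruction C D h v n₀) (hD : 0 < D) :
    lastPolyphase D v ≠ 0 := by
  intro hzero
  have hrow := congrFun (H.analysisMatrix_mulVec hD id) (n₀ - D + 1)
  simp [hzero] at hrow

end LastPolyphase

theorem necLength_generic_noPR_general (C D mh mv : ℕ) (hD : 0 < D)
    (hnec : ¬ NecLenCond C D mh mv) :
    ∀ᵐ h ∂(volume : Measure (Fin C → Fin mh → ℂ)),
      ∀ n₀ : ℤ, ¬ ∃ v : Fin C → Fin mv → ℂ, PerfectReconstruction C D h v n₀ := by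
  rw [ae_all_iff]
  intro n₀
  rcases (mv / D).eq_zero_or_pos with hL | hL
  · have : IsEmpty (Fin (mv / D)) := by rw [hL]; infer_instance
    exact .of_forall fun h ⟨v, H⟩ => H.lastPolyphase_ne_zero hD (Subsingleton.elim _ _)
  · have hcard : Fintype.card (Fin C) < #(blockStarts D (mv / D) mh) := by
      have hsum := not_le.1 fun hle => hnec ⟨hL, hle⟩
      rw [Fintype.card_fin]
      have := card_blockStarts hD hL mh
      omega
    obtain ⟨b, hinj, havoid⟩ := exists_blockRow_injective_avoiding hD hcard (n₀ - D + 1)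
    filter_upwards [ae_det_analysisMatrix_ne_zero hinj] with h hdet
    rintro ⟨v, H⟩
    refine H.lastPolyphase_ne_zero hD (Matrix.eq_zero_of_mulVec_eq_zero hdet ?_)
    rw [H.analysisMatrix_mulVec hD]
    exact funext fun r => if_neg (havoid r)

/-- Proposition 3 (necessary length): if `C ≥ 2D`, `m_h > D` and
`1 ≤ m_v < m_v^N(C,D,m_h)`, then for almost every analysis bank `h`, no length-`m_v`
synthesis bank achieves perfect reconstruction with any admissible delay `n₀`. -/
theorem necLength_generic_noPR (C D mh mv : ℕ) (hC : 0 < C) (hD : 0 < D)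
    (hmhpos : 0 < mh) (hCD : 2 * D ≤ C) (hmh : D < mh)
    (hmvpos : 1 ≤ mv) (hmv : mv < mvN C D mh) :
    ∀ᵐ h ∂(volume : Measure (Fin C → Fin mh → ℂ)),
      ∀ n₀ : ℤ, 0 ≤ ⌈(n₀ : ℚ) / (D : ℚ)⌉ →
        ⌈(n₀ : ℚ) / (D : ℚ)⌉ ≤ ((mh / D : ℕ) : ℤ) + ((mv / D : ℕ) : ℤ) - 2 →
        ¬ ∃ v : Fin C → Fin mv → ℂ, PerfectReconstruction C D h v n₀ := by
  have hnec : ¬ NecLenCond C D mh mv := Nat.notMem_of_lt_sInf hmv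
  filter_upwards [necLength_generic_noPR_general C D mh mv hD hnec] with h hh n₀ _ _ using hh n₀
end
end

section
/- (Lemma 2, at least 2-fold oversampling is required.) Let C, D, m_h be positive integers with m_h ≥ 2D and C < 2D. Then there is no positive integer m_v with ⌊m_v/D⌋ ≥ 1 satisfying ∑_{p=0}^{D−1} ⌈(⌈(m_h − p)/D⌉ − 1)/⌊m_v/D⌋⌉ ≤ C − D; that is, the sufficient-length condition is satisfied by no finite m_v. -/
open Finset

/-- The sufficient-length condition: `⌊m_v/D⌋ ≥ 1` and
`∑_{p=0}^{D-1} ⌈(m_{h;p} - 1)/⌊m_v/D⌋⌉ ≤ C - D`. -/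
def SuffLenCond (C D mh mv : ℕ) : Prop :=
  1 ≤ mv / D ∧
    ∑ p ∈ Finset.range D, ⌈((polyLen D mh p : ℚ) - 1) / ((mv / D : ℕ) : ℚ)⌉
      ≤ (C : ℤ) - (D : ℤ)

/-!
Shrinking `m_h` keeps the sufficient-length condition, so we may replace `m_h` by `min m_h (2 * D)`.
The polyphase lengths are then at most `2`, and dividing an integer `≤ 1` by `⌊m_v/D⌋` before
rounding up cannot make it smaller: the sum in the condition is at least `∑_p (m_{h;p} - 1)`. Since
the residue classes mod `D` partition the `m_h` samples, this is `m_h - D`, whence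
`min m_h (2 * D) ≤ C`.
-/

lemma polyLen_mono {D m m' : ℕ} (h : m ≤ m') (p : ℕ) : polyLen D m p ≤ polyLen D m' p := by
  unfold polyLen
  gcongr

lemma polyLen_le_of_le_mul {D m k : ℕ} (h : m ≤ k * D) (p : ℕ) : polyLen D m p ≤ k := by
  have hm : (m : ℚ) ≤ k * D := mod_cast h
  refine Int.ceil_le.mpr (div_le_of_le_mul₀ D.cast_nonneg (mod_cast k.cast_nonneg) ?_)
  push_cast
  linarith [p.cast_nonneg (α := ℚ)]

lemma polyLen_eq_card_filter_mod {D p : ℕ} (hp : p < D) (m : ℕ) :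
    polyLen D m p = #{n ∈ range m | n % D = p} := by
  have hcount := Nat.count_modEq_card_eq_ceil m (Nat.zero_lt_of_lt hp) p
  simpa only [polyLen, Nat.count_eq_card_filter_range, Nat.ModEq, Nat.mod_eq_of_lt hp]
    using hcount.symm

lemma sum_polyLen {D : ℕ} (hD : 0 < D) (m : ℕ) : ∑ p ∈ range D, polyLen D m p = m := by
  calc ∑ p ∈ range D, polyLen D m p
      = ∑ p ∈ range D, (#{n ∈ range m | n % D = p} : ℤ) :=
        sum_congr rfl fun p hp ↦ polyLen_eq_card_filter_mod (mem_range.mp hp) m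
    _ = #(range m) := by
        rw [card_eq_sum_card_fiberwise fun n _ ↦ mem_coe.mpr (mem_range.mpr (Nat.mod_lt n hD)),
          Nat.cast_sum]
    _ = m := by rw [card_range]

lemma le_ceil_div_of_le_one {K : Type*} [Field K] [LinearOrder K] [IsStrictOrderedRing K]
    [FloorRing K] {x : ℤ} {v : K} (hx : x ≤ 1) (hv : 1 ≤ v) : x ≤ ⌈(x : K) / v⌉ := by
  have hx' : (x : K) - 1 ≤ 0 := sub_nonpos.mpr (mod_cast hx)
  rw [Int.le_ceil_iff, lt_div_iff₀ (zero_lt_one.trans_le hv)]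
  calc ((x : K) - 1) * v ≤ x - 1 := mul_le_of_one_le_right hx' hv
    _ < x := sub_one_lt _

namespace SuffLenCond

variable {C D mh mh' mv : ℕ}

lemma pos_right (h : SuffLenCond C D mh mv) : 0 < D :=
  Nat.pos_of_ne_zero fun hD ↦ by simpa [hD] using h.1

lemma anti (h : SuffLenCond C D mh mv) (hle : mh' ≤ mh) : SuffLenCond C D mh' mv := by
  refine ⟨h.1, (sum_le_sum fun p _ ↦ ?_).trans h.2⟩
  have hp := polyLen_mono (D := D) hle p
  gcongr

lemma le_of_le_two_mul (h : SuffLenCond C D mh mv) (hmh : mh ≤ 2 * D) : mh ≤ C := by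
  have hterm (p : ℕ) : polyLen D mh p - 1 ≤ ⌈((polyLen D mh p : ℚ) - 1) / ((mv / D : ℕ) : ℚ)⌉ := by
    have hlen : polyLen D mh p - 1 ≤ 1 := by
      have := polyLen_le_of_le_mul hmh p
      omega
    simpa using le_ceil_div_of_le_one (K := ℚ) hlen (Nat.one_le_cast.mpr h.1)
  have hsum : (mh : ℤ) - D ≤ C - D :=
    calc (mh : ℤ) - D = ∑ p ∈ range D, (polyLen D mh p - 1) := by
          simp [sum_sub_distrib, sum_polyLen h.pos_right]
      _ ≤ ∑ p ∈ range D, ⌈((polyLen D mh p : ℚ) - 1) / ((mv / D : ℕ) : ℚ)⌉ :=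
          sum_le_sum fun p _ ↦ hterm p
      _ ≤ C - D := h.2
  omega

lemma min_le (h : SuffLenCond C D mh mv) : min mh (2 * D) ≤ C :=
  (h.anti (min_le_left _ _)).le_of_le_two_mul (min_le_right _ _)

end SuffLenCond

theorem no_suffLength_if_undersampled_general (C D mh : ℕ) (hmh : C < mh) (hCD : C < 2 * D) :
    ¬ ∃ mv : ℕ, SuffLenCond C D mh mv :=
  fun ⟨_, h⟩ ↦ (lt_min hmh hCD).not_ge h.min_le

/-- Lemma 2: if `m_h ≥ 2D` and `C < 2D`, no positive integer `m_v` satisfies the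
sufficient-length condition. -/
theorem no_suffLength_if_undersampled (C D mh : ℕ) (hC : 0 < C) (hD : 0 < D)
    (hmhpos : 0 < mh) (hmh : 2 * D ≤ mh) (hCD : C < 2 * D) :
    ¬ ∃ mv : ℕ, 0 < mv ∧ SuffLenCond C D mh mv := by
  rintro ⟨mv, -, h⟩
  exact no_suffLength_if_undersampled_general C D mh (hCD.trans_le hmh) hCD ⟨mv, h⟩
end

section
/- (The sufficient length does not exceed the analysis filter length.) Let C, D, m_h be positive integers with C ≥ 2D and m_h > D. Then m_v = m_h satisfies the sufficient-length condition; more precisely, ∑_{p=0}^{D−1} ⌈(⌈(m_h − p)/D⌉ − 1)/⌊m_h/D⌋⌉ ≤ D ≤ C − D. Consequently m_v^S(C,D,m_h) ≤ m_h. -/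
open Finset

noncomputable section

/-- The sufficient length `m_v^S(C,D,m_h)`. -/
def mvS (C D mh : ℕ) : ℕ := sInf {mv : ℕ | SuffLenCond C D mh mv}

lemma polyLen_le_div_add_one (D m p : ℕ) : polyLen D m p ≤ ((m / D : ℕ) : ℤ) + 1 :=
  calc
    polyLen D m p ≤ ⌈(m : ℚ) / (D : ℚ)⌉ := by
      unfold polyLen
      gcongr
      exact sub_le_self _ p.cast_nonneg
    _ ≤ ⌊(m : ℚ) / (D : ℚ)⌋ + 1 := Int.ceil_le_floor_add_one _
    _ = ((m / D : ℕ) : ℤ) + 1 := by rw [Rat.floor_natCast_div_natCast, Int.natCast_div]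

lemma ceil_polyLen_sub_one_div_le_one {D m q : ℕ} (hq : m / D ≤ q) (p : ℕ) :
    ⌈((polyLen D m p : ℚ) - 1) / (q : ℚ)⌉ ≤ 1 := by
  have hpoly : polyLen D m p ≤ (q : ℤ) + 1 :=
    (polyLen_le_div_add_one D m p).trans (by gcongr)
  have hnum : (polyLen D m p : ℚ) - 1 ≤ q := sub_le_iff_le_add.2 (mod_cast hpoly)
  rw [Int.ceil_le, Int.cast_one]
  exact div_le_one_of_le₀ hnum q.cast_nonneg

lemma sum_ceil_polyLen_sub_one_div_le {D m q : ℕ} (hq : m / D ≤ q) :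
    ∑ p ∈ range D, ⌈((polyLen D m p : ℚ) - 1) / (q : ℚ)⌉ ≤ (D : ℤ) := by
  simpa using sum_le_card_nsmul (range D) _ 1 fun p _ ↦ ceil_polyLen_sub_one_div_le_one hq p

lemma suffLenCond_of_le {C D mh mv : ℕ} (hD : 0 < D) (hCD : 2 * D ≤ C) (hDv : D ≤ mv)
    (hmv : mh ≤ mv) : SuffLenCond C D mh mv :=
  ⟨Nat.div_pos hDv hD,
    (sum_ceil_polyLen_sub_one_div_le (Nat.div_le_div_right hmv)).trans (by lia)⟩

lemma SuffLenCond.mvS_le {C D mh mv : ℕ} (h : SuffLenCond C D mh mv) : mvS C D mh ≤ mv :=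
  Nat.sInf_le h

/-- The sufficient length does not exceed the analysis filter length: for `C ≥ 2D` and
`m_h > D`, `m_v = m_h` satisfies the sufficient-length condition; more precisely
`∑_{p=0}^{D-1} ⌈(m_{h;p} - 1)/⌊m_h/D⌋⌉ ≤ D ≤ C - D`. Consequently
`m_v^S(C,D,m_h) ≤ m_h`. -/
theorem suffLength_le_analysisLength (C D mh : ℕ) (hD : 0 < D) (hCD : 2 * D ≤ C)
    (hmh : D < mh) :
    (∑ p ∈ Finset.range D, ⌈((polyLen D mh p : ℚ) - 1) / ((mh / D : ℕ) : ℚ)⌉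
        ≤ (D : ℤ)) ∧
    ((D : ℤ) ≤ (C : ℤ) - (D : ℤ)) ∧
    SuffLenCond C D mh mh ∧
    mvS C D mh ≤ mh := by
  have hcond : SuffLenCond C D mh mh := suffLenCond_of_le hD hCD hmh.le le_rfl
  exact ⟨sum_ceil_polyLen_sub_one_div_le le_rfl, by lia, hcond, hcond.mvS_le⟩
end
end
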